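/- arXiv:0709.3803 — 2 statements merged into one kernel-verified Lean document; each statement's English description precedes it below -/
import Mathlib

section
/- Let k be an algebraically closed field, H a group, V a finite-dimensional k-vector space, and ρ : H → GL(V) a representation. Equip End_k(V) with the H-action h·f = ρ(h) ∘ f ∘ ρ(h)^{-1} (this H-module is isomorphic to V ⊗ V*). If End_k(V) is a semisimple H-module, then V is a semisimple H-module. -/
/-- A `k`-submodule `p` of `V` is an `H`-submodule (subrepresentation) for the
representation `ρ` if it is stable under the action of every element of `H`. -/
def IsSubrep {k S V : Type*} [CommRing k] [Group S] [AddCommGroup V] [Module k V]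
    (ρ : Representation k S V) (p : Submodule k V) : Prop :=
  ∀ (s : S), ∀ v ∈ p, ρ s v ∈ p

/-- A representation is semisimple if every submodule stable under the group action
has a stable direct complement. -/
def IsSemisimpleRep {k S V : Type*} [CommRing k] [Group S] [AddCommGroup V] [Module k V]
    (ρ : Representation k S V) : Prop :=
  ∀ p : Submodule k V, IsSubrep ρ p → ∃ q : Submodule k V, IsSubrep ρ q ∧ IsCompl p q

/-- let `k` be algebraically closed, `V` a finite-dimensional
`k`-vector space and `ρ` a representation of the group `H` on `V`.  Equip
`End_k(V) = V →ₗ[k] V` with the conjugation action `h · f = ρ h ∘ f ∘ ρ h⁻¹`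
(the representation `ρ.linHom ρ`, isomorphic to `V ⊗ V*`).  If `End_k(V)` is a
semisimple `H`-module, then `V` is a semisimple `H`-module. -/
theorem stmt_3 {k H V : Type*} [Field k] [IsAlgClosed k] [Group H]
    [AddCommGroup V] [Module k V] [FiniteDimensional k V]
    (ρ : Representation k H V)
    (hss : IsSemisimpleRep (ρ.linHom ρ)) :
    IsSemisimpleRep ρ := by
  intro W hW
  obtain ⟨W', hW'⟩ := W.exists_isCompl
  let K : Submodule k (V →ₗ[k] V) :=
    { carrier := {f | (∀ v, f v ∈ W) ∧ ∀ w ∈ W, f w = 0}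
      add_mem' := fun {a b} ha hb => ⟨fun v => W.add_mem (ha.1 v) (hb.1 v),
        fun w hw => by simp [ha.2 w hw, hb.2 w hw]⟩
      zero_mem' := ⟨fun v => by simp, fun w _ => by simp⟩
      smul_mem' := fun c a ha => ⟨fun v => W.smul_mem c (ha.1 v),
        fun w hw => by simp [ha.2 w hw]⟩ }
  have hK : IsSubrep (ρ.linHom ρ) K := by
    intro s f hf
    refine ⟨fun v => ?_, fun w hw => ?_⟩
    · simpa using hW s _ (hf.1 _)
    · have := hf.2 _ (hW s⁻¹ w hw)
      simp [this]
  obtain ⟨Q, hQ, hKQ⟩ := hss K hK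
  have hex : ∃ π : V →ₗ[k] V, (∀ v, π v ∈ W) ∧ ∀ w ∈ W, π w = w := by
    obtain ⟨g, hg⟩ := W.subtype.exists_leftInverse_of_injective (by simp)
    refine ⟨W.subtype ∘ₗ g, fun v => by simp, fun w hw => ?_⟩
    have := LinearMap.congr_fun hg ⟨w, hw⟩
    simp at this
    simp [this]
  obtain ⟨π, hπ1, hπ2⟩ := hex
  have hmem : π ∈ K ⊔ Q := by rw [hKQ.sup_eq_top]; trivial
  obtain ⟨a, ha, b, hb, hab⟩ := Submodule.mem_sup.1 hmem
  have hbe : ∀ v, b v = π v - a v := fun v => by rw [← hab]; simp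
  have hb1 : ∀ v, b v ∈ W := fun v => by
    rw [hbe]; exact W.sub_mem (hπ1 v) (ha.1 v)
  have hb2 : ∀ w ∈ W, b w = w := fun w hw => by
    rw [hbe, hπ2 w hw, ha.2 w hw, sub_zero]
  have hinv : ∀ s, ρ.linHom ρ s b = b := by
    intro s
    have h1 : ρ.linHom ρ s b - b ∈ Q := Q.sub_mem (hQ s b hb) hb
    have h2 : ρ.linHom ρ s b - b ∈ K := by
      refine ⟨fun v => ?_, fun w hw => ?_⟩
      · exact W.sub_mem (by simpa using hW s _ (hb1 _)) (hb1 v)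
      · have := hb2 _ (hW s⁻¹ w hw)
        simp [this, hb2 w hw]
    exact sub_eq_zero.1 (Submodule.disjoint_def.1 hKQ.disjoint _ h2 h1)
  refine ⟨LinearMap.ker b, ?_, ?_⟩
  · intro s v hv
    rw [LinearMap.mem_ker] at hv ⊢
    have := LinearMap.congr_fun (hinv s) (ρ s v)
    rw [← this]
    simp [hv]
  · constructor
    · rw [Submodule.disjoint_def]
      intro x hx hx'
      rw [← hb2 x hx]; exact hx'
    · rw [codisjoint_iff, eq_top_iff]
      intro x _
      refine Submodule.mem_sup.2 ⟨b x, hb1 x, x - b x, ?_, by simp⟩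
      simp [hb2 _ (hb1 x)]
end

section
/- Let k be a field, V a finite-dimensional k-vector space equipped with a k-linear action of a group S, and let S₁ ⊆ S₂ ⊆ ⋯ be an ascending sequence of subgroups of S with ⋃_{i≥1} S_i = S. Then there exists N such that for every i ≥ N: every S_i-submodule of V is an S-submodule; in particular V^{S_i} = V^S, and V is a semisimple S_i-module if and only if V is a semisimple S-module. -/
/-- The submodule `V^S` of `S`-fixed vectors of the representation `ρ`. -/
def fixedSubmodule {k S V : Type*} [CommRing k] [Group S] [AddCommGroup V] [Module k V]
    (ρ : Representation k S V) : Submodule k V where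
  carrier := {v | ∀ s : S, ρ s v = v}
  add_mem' := by
    intro a b ha hb s
    rw [map_add, ha s, hb s]
  zero_mem' := fun s => map_zero (ρ s)
  smul_mem' := by
    intro c v hv s
    rw [map_smul, hv s]

/-- for a finite-dimensional representation `V` of `S` and an
ascending sequence of subgroups `S₁ ⊆ S₂ ⊆ ⋯` of `S` with union `S`, there is an
`N` such that for all `i ≥ N` every `S_i`-submodule of `V` is an `S`-submodule;
in particular `V^{S_i} = V^S`, and `V` is `S_i`-semisimple iff it is
`S`-semisimple. -/
theorem stmt_10 {k S V : Type*} [Field k] [Group S] [AddCommGroup V] [Module k V]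
    [FiniteDimensional k V] (ρ : Representation k S V)
    (Si : ℕ → Subgroup S) (hmono : Monotone Si) (hunion : ∀ s : S, ∃ i, s ∈ Si i) :
    ∃ N : ℕ, ∀ i ≥ N,
      (∀ p : Submodule k V, IsSubrep (ρ.comp (Si i).subtype) p → IsSubrep ρ p) ∧
      fixedSubmodule (ρ.comp (Si i).subtype) = fixedSubmodule ρ ∧
      (IsSemisimpleRep (ρ.comp (Si i).subtype) ↔ IsSemisimpleRep ρ) := by
  classical
  let W : ℕ →o Submodule k (Module.End k V) :=
    ⟨fun i => Submodule.span k ((fun s => ρ s - 1) '' (Si i : Set S)), fun i j hij =>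
      Submodule.span_mono (Set.image_mono (hmono hij))⟩
  obtain ⟨N, hN⟩ := monotone_stabilizes_iff_noetherian.mpr
    (inferInstance : IsNoetherian k (Module.End k V)) W
  refine ⟨N, fun i hi => ?_⟩
  have key : ∀ s : S, ρ s - 1 ∈ Submodule.span k ((fun s => ρ s - 1) '' (Si i : Set S)) := by
    intro s
    obtain ⟨j, hj⟩ := hunion s
    have h1 : ρ s - 1 ∈ W (max i j) :=
      Submodule.subset_span ⟨s, hmono (le_max_right i j) hj, rfl⟩
    rw [← hN _ (le_trans hi (le_max_left i j)), hN i hi] at h1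
    exact h1
  have hA : ∀ p : Submodule k V, IsSubrep (ρ.comp (Si i).subtype) p → IsSubrep ρ p := by
    intro p hp s v hv
    have h2 : ∀ f ∈ Submodule.span k ((fun s => ρ s - 1) '' (Si i : Set S)), f v ∈ p := by
      intro f hf
      induction hf using Submodule.span_induction with
      | mem f hf =>
        obtain ⟨t, ht, rfl⟩ := hf
        exact p.sub_mem (hp ⟨t, ht⟩ v hv) hv
      | zero => exact p.zero_mem
      | add f g _ _ hf hg => exact p.add_mem hf hg
      | smul c f _ hf => exact p.smul_mem c hf
    have h3 := p.add_mem (h2 _ (key s)) hv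
    simpa using h3
  have hB : ∀ p : Submodule k V, IsSubrep ρ p → IsSubrep (ρ.comp (Si i).subtype) p :=
    fun p hp s v hv => hp s v hv
  refine ⟨hA, ?_, ?_⟩
  · apply le_antisymm
    · intro v hv s
      have h2 : ∀ f ∈ Submodule.span k ((fun s => ρ s - 1) '' (Si i : Set S)), f v = 0 := by
        intro f hf
        induction hf using Submodule.span_induction with
        | mem f hf =>
          obtain ⟨t, ht, rfl⟩ := hf
          exact sub_eq_zero.mpr (hv ⟨t, ht⟩)
        | zero => rfl
        | add f g _ _ hf hg => simp [hf, hg]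
        | smul c f _ hf => simp [hf]
      exact sub_eq_zero.mp (h2 _ (key s))
    · intro v hv s
      exact hv s
  · constructor
    · intro h p hp
      obtain ⟨q, hq, hc⟩ := h p (hB p hp)
      exact ⟨q, hA q hq, hc⟩
    · intro h p hp
      obtain ⟨q, hq, hc⟩ := h p (hA p hp)
      exact ⟨q, hB q hq, hc⟩
end
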